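/- arXiv:0804.3261 — 3 statements merged into one kernel-verified Lean document; each statement's English description precedes it below -/
import Mathlib

section
/- The set function ρ(J) = log₂ det(Σ_{k ∈ J} q_k h_k† h_k + I), defined on subsets J of {1,…,K}, is submodular: ρ(J₁ ∪ J₂) + ρ(J₁ ∩ J₂) ≤ ρ(J₁) + ρ(J₂) for all J₁, J₂ ⊆ {1,…,K}. Moreover ρ is nondecreasing and ρ(∅) = 0, so the capacity region of the Gaussian multiple-access channel is a polymatroid. -/
open Matrix

/-!
For a positive definite `A` and `B = Lᴴ L` the matrix determinant lemma reads
`det (A + B) = det A * det (1 + L A⁻¹ Lᴴ)`, so the gain `det (A + B) / det A` depends on `A` only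
through `A⁻¹`. Inversion reverses the Loewner order and the determinant preserves it on positive
semidefinite matrices, so the gain decreases as `A` grows. This property of diminishing returns is
submodularity of `log det`.
-/

section LoewnerOrder

open scoped ComplexOrder MatrixOrder

variable {n 𝕜 : Type*} [RCLike 𝕜] {A B D : Matrix n n 𝕜}

theorem posDef_of_posDef_of_le (hA : A.PosDef) (hAB : A ≤ B) : B.PosDef := by
  simpa only [add_sub_cancel] using hA.add_posSemidef (le_iff.1 hAB)

variable [Fintype n] [DecidableEq n]

theorem one_le_det_one_add (hA : 0 ≤ A) : 1 ≤ (1 + A).det := by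
  have hH := hA.posSemidef.isHermitian
  have det_eq : (1 + A).det = ∏ i, (1 + (hH.eigenvalues i : 𝕜)) := by
    conv_lhs => rw [hH.spectral_theorem, Unitary.conjStarAlgAut_apply, det_one_add_mul_comm,
      ← mul_assoc, Unitary.coe_star_mul_self, one_mul, ← diagonal_one, diagonal_add, det_diagonal]
    rfl
  rw [det_eq]
  exact Finset.one_le_prod fun i _ =>
    le_add_of_nonneg_right (RCLike.ofReal_nonneg.2 (hA.posSemidef.eigenvalues_nonneg i))

theorem det_le_det_of_le (hA : 0 ≤ A) (hAB : A ≤ B) : A.det ≤ B.det := by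
  by_cases hdet : A.det = 0
  · exact hdet ▸ (hA.trans hAB).posSemidef.det_nonneg
  have hA' : A.PosDef := hA.posSemidef.posDef_iff_det_ne_zero.2 hdet
  obtain ⟨L, hL⟩ := CStarAlgebra.nonneg_iff_eq_star_mul_self.1 (sub_nonneg.2 hAB)
  calc A.det ≤ A.det * (1 + L * A⁻¹ * star L).det :=
        le_mul_of_one_le_right hA'.det_pos.le
          (one_le_det_one_add (star_right_conjugate_nonneg hA'.inv.posSemidef.nonneg L))
    _ = B.det := by rw [← det_add_mul _ _ (Ne.isUnit hdet), ← hL, add_sub_cancel]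

theorem inv_le_inv_of_posDef_of_le (hA : A.PosDef) (hAB : A ≤ B) : B⁻¹ ≤ A⁻¹ := by
  have hB : B.PosDef := posDef_of_posDef_of_le hA hAB
  let := hA.isUnit.invertible
  let := hB.isUnit.invertible
  let := hA.inv.isUnit.invertible
  -- `A ≤ B` and `B⁻¹ ≤ A⁻¹` are the two Schur complement criteria for the block matrix
  -- `[B 1; 1 A⁻¹]`.
  have block : (fromBlocks B 1 (1 : Matrix n n 𝕜)ᴴ A⁻¹).PosSemidef := by
    rw [PosDef.fromBlocks₂₂ B 1 hA.inv]
    simpa using le_iff.1 hAB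
  rw [PosDef.fromBlocks₁₁ 1 A⁻¹ hB] at block
  simpa [le_iff] using block

theorem det_add_mul_det_le_of_le (hA : 0 ≤ A) (hAD : A ≤ D) (hB : 0 ≤ B) :
    (D + B).det * A.det ≤ (A + B).det * D.det := by
  by_cases hdet : A.det = 0
  · rw [hdet, mul_zero]
    exact mul_nonneg (add_nonneg hA hB).posSemidef.det_nonneg (hA.trans hAD).posSemidef.det_nonneg
  have hA' : A.PosDef := hA.posSemidef.posDef_iff_det_ne_zero.2 hdet
  have hD : D.PosDef := posDef_of_posDef_of_le hA' hAD
  obtain ⟨L, rfl⟩ := CStarAlgebra.nonneg_iff_eq_star_mul_self.1 hB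
  have gain_le : (1 + L * D⁻¹ * star L).det ≤ (1 + L * A⁻¹ * star L).det :=
    det_le_det_of_le
      (add_nonneg zero_le_one (star_right_conjugate_nonneg hD.inv.posSemidef.nonneg L))
      (add_le_add_right
        (star_right_conjugate_le_conjugate (inv_le_inv_of_posDef_of_le hA' hAD) L) 1)
  calc (D + star L * L).det * A.det
      = A.det * D.det * (1 + L * D⁻¹ * star L).det := by
        rw [det_add_mul _ _ hD.det_pos.ne'.isUnit]; ring
    _ ≤ A.det * D.det * (1 + L * A⁻¹ * star L).det :=
        mul_le_mul_of_nonneg_left gain_le (mul_nonneg hA'.det_pos.le hD.det_pos.le)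
    _ = (A + star L * L).det * D.det := by
        rw [det_add_mul _ _ (Ne.isUnit hdet)]; ring

theorem re_det_pos (hA : A.PosDef) : 0 < RCLike.re A.det :=
  (RCLike.pos_iff.1 hA.det_pos).1

theorem re_det_mul_re_det (hA : A.PosSemidef) :
    RCLike.re A.det * RCLike.re B.det = RCLike.re (A.det * B.det) := by
  rw [RCLike.mul_re, (RCLike.nonneg_iff.1 hA.det_nonneg).2, zero_mul, sub_zero]

end LoewnerOrder

section GaussianMAC

open scoped ComplexOrder MatrixOrder

variable {ι n 𝕜 : Type*} [RCLike 𝕜]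

/-- Covariance of the signal received from the users in `J`, where user `k` contributes `Q k`,
in the presence of independent noise of covariance `N`. -/
def receivedCovariance (N : Matrix n n 𝕜) (Q : ι → Matrix n n 𝕜) (J : Finset ι) : Matrix n n 𝕜 :=
  ∑ k ∈ J, Q k + N

variable {N : Matrix n n 𝕜} {Q : ι → Matrix n n 𝕜}

theorem receivedCovariance_mono (hQ : ∀ k, (Q k).PosSemidef) : Monotone (receivedCovariance N Q) :=
  fun _ _ hJ => add_le_add_left
    (Finset.sum_le_sum_of_subset_of_nonneg hJ fun k _ _ => (hQ k).nonneg) N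

theorem posSemidef_receivedCovariance (hN : N.PosSemidef) (hQ : ∀ k, (Q k).PosSemidef)
    (J : Finset ι) : (receivedCovariance N Q J).PosSemidef :=
  (posSemidef_sum J fun k _ => hQ k).add hN

theorem posDef_receivedCovariance (hN : N.PosDef) (hQ : ∀ k, (Q k).PosSemidef) (J : Finset ι) :
    (receivedCovariance N Q J).PosDef :=
  PosDef.posSemidef_add (posSemidef_sum J fun k _ => hQ k) hN

variable [Fintype n] [DecidableEq n]

theorem det_receivedCovariance_union_mul_inter_le [DecidableEq ι] (hN : N.PosSemidef)
    (hQ : ∀ k, (Q k).PosSemidef) (J₁ J₂ : Finset ι) :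
    (receivedCovariance N Q (J₁ ∪ J₂)).det * (receivedCovariance N Q (J₁ ∩ J₂)).det ≤
      (receivedCovariance N Q J₁).det * (receivedCovariance N Q J₂).det := by
  have add_sdiff {J J' : Finset ι} (hJ : J ⊆ J') :
      receivedCovariance N Q J + ∑ k ∈ J' \ J, Q k = receivedCovariance N Q J' := by
    simp only [receivedCovariance, ← Finset.sum_sdiff hJ]
    abel
  have h := det_add_mul_det_le_of_le (B := ∑ k ∈ J₁ \ J₂, Q k)
    (posSemidef_receivedCovariance hN hQ (J₁ ∩ J₂)).nonneg
    (receivedCovariance_mono hQ Finset.inter_subset_right)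
    (posSemidef_sum _ fun k _ => hQ k).nonneg
  rwa [← Finset.union_sdiff_right, add_sdiff Finset.subset_union_right, Finset.union_sdiff_right,
    ← Finset.sdiff_inter_self_left, add_sdiff Finset.inter_subset_left] at h

/-- The rank function `J ↦ log_b (det (∑ k ∈ J, Q k + N) / det N)` of the Gaussian multiple-access
channel: the largest sum rate of the users in `J`, in base-`b` units, for received covariances `Q`
and noise covariance `N`. The determinants are real for Hermitian matrices, and are read as such
by `RCLike.re`. -/
noncomputable def macRank (b : ℝ) (N : Matrix n n 𝕜) (Q : ι → Matrix n n 𝕜) (J : Finset ι) : ℝ :=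
  Real.logb b (RCLike.re (receivedCovariance N Q J).det / RCLike.re N.det)

variable {b : ℝ}

theorem macRank_empty (hN : N.PosDef) : macRank b N Q ∅ = 0 := by
  simp [macRank, receivedCovariance, (re_det_pos hN).ne']

theorem macRank_mono (hb : 1 < b) (hN : N.PosDef) (hQ : ∀ k, (Q k).PosSemidef) :
    Monotone (macRank b N Q) := by
  intro J₁ J₂ hJ
  have hX := posDef_receivedCovariance hN hQ
  have re_det_le := RCLike.re_le_re
    (det_le_det_of_le (hX J₁).posSemidef.nonneg (receivedCovariance_mono hQ hJ))
  exact Real.logb_le_logb_of_le hb (div_pos (re_det_pos (hX J₁)) (re_det_pos hN))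
    (div_le_div_of_nonneg_right re_det_le (re_det_pos hN).le)

theorem macRank_union_add_inter_le [DecidableEq ι] (hb : 1 < b) (hN : N.PosDef)
    (hQ : ∀ k, (Q k).PosSemidef) (J₁ J₂ : Finset ι) :
    macRank b N Q (J₁ ∪ J₂) + macRank b N Q (J₁ ∩ J₂) ≤ macRank b N Q J₁ + macRank b N Q J₂ := by
  have hX := posDef_receivedCovariance hN hQ
  have hpos J : 0 < RCLike.re (receivedCovariance N Q J).det / RCLike.re N.det :=
    div_pos (re_det_pos (hX J)) (re_det_pos hN)
  simp only [macRank]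
  rw [← Real.logb_mul (hpos _).ne' (hpos _).ne', ← Real.logb_mul (hpos _).ne' (hpos _).ne']
  refine Real.logb_le_logb_of_le hb (mul_pos (hpos _) (hpos _)) ?_
  simp only [div_mul_div_comm, re_det_mul_re_det (hX _).posSemidef]
  exact div_le_div_of_nonneg_right
    (RCLike.re_le_re (det_receivedCovariance_union_mul_inter_le hN.posSemidef hQ J₁ J₂))
    (mul_pos (re_det_pos hN) (re_det_pos hN)).le

theorem mac_rank_function_polymatroid_general [DecidableEq ι] (hb : 1 < b) (hN : N.PosDef)
    (hQ : ∀ k, (Q k).PosSemidef) :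
    (∀ J₁ J₂ : Finset ι, macRank b N Q (J₁ ∪ J₂) + macRank b N Q (J₁ ∩ J₂) ≤
      macRank b N Q J₁ + macRank b N Q J₂) ∧
    (∀ J₁ J₂ : Finset ι, J₁ ⊆ J₂ → macRank b N Q J₁ ≤ macRank b N Q J₂) ∧
    macRank b N Q ∅ = 0 :=
  ⟨macRank_union_add_inter_le hb hN hQ, fun _ _ hJ => macRank_mono hb hN hQ hJ, macRank_empty hN⟩

end GaussianMAC

/-- The set function `ρ(J) = log₂ det(∑_{k∈J} qₖ hₖ† hₖ + I)` is submodular, nondecreasing,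
and vanishes at `∅` (the polymatroid structure of the MAC capacity region). -/
theorem mac_rank_function_polymatroid {M K : ℕ} (h : Fin K → Fin M → ℂ)
    (q : Fin K → ℝ) (hq : ∀ k, 0 ≤ q k)
    (ρ : Finset (Fin K) → ℝ)
    (hρ : ∀ J : Finset (Fin K), ρ J = Real.logb 2
      (((∑ k ∈ J, q k • Matrix.vecMulVec (star ∘ h k) (h k)) + 1 :
          Matrix (Fin M) (Fin M) ℂ).det.re)) :
    (∀ J₁ J₂ : Finset (Fin K), ρ (J₁ ∪ J₂) + ρ (J₁ ∩ J₂) ≤ ρ J₁ + ρ J₂) ∧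
    (∀ J₁ J₂ : Finset (Fin K), J₁ ⊆ J₂ → ρ J₁ ≤ ρ J₂) ∧
    ρ ∅ = 0 := by
  open scoped ComplexOrder in
  obtain rfl : ρ = macRank 2 1 fun k => q k • vecMulVec (star ∘ h k) (h k) :=
    funext fun J => by simp [hρ, macRank, receivedCovariance]
  exact mac_rank_function_polymatroid_general one_lt_two .one
    fun k => (posSemidef_vecMulVec_star_self (h k)).smul (hq k)
end

section
/- Let β₁ ≥ … ≥ β_K ≥ 0 with β_{K+1}=0, h_k ∈ ℂ^M, and define the objective Φ(q) = Σ_k q_k − Σ_{k=1}^K (β_k − β_{k+1}) log₂ det(Σ_{i=1}^k q_i h_i† h_i + I) for q ∈ ℝ₊^K. Fix m and all q_i for i ≠ m, and let d(t) = Σ_{k=m}^K (β_k − β_{k+1}) · h_m (t·h_m† h_m + Σ_{i≤k, i≠m} q_i h_i† h_i + I)^{-1} h_m†. Then d is nonincreasing in t ≥ 0, and the minimizer of Φ over q_m ≥ 0 is q_m* = 0 if d(0) ≤ ln 2, and otherwise q_m* is the unique root of d(t) = ln 2. -/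
/-!
By the matrix determinant lemma and the Sherman–Morrison formula, a rank-one update `B + t h† h` of
a positive definite matrix multiplies `det B` by `1 + t c` and turns `h B⁻¹ h†` into
`c / (1 + t c)`, where `c = h B⁻¹ h† ≥ 0`. As a function of its `m`-th coordinate, `Φ` is therefore
a constant plus `t - (∑ wₖ log (1 + t cₖ)) / log 2`, and `d t = ∑ wₖ cₖ / (1 + t cₖ)` is the
derivative of the concave sum of logarithms. The minimizer is then read off from the tangent
inequality for `log` together with complementary slackness at `0`; a root of `d t = log 2` exists
because `d` decreases continuously to `0`.
-/

open Matrix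

/-- The rank-one outer product `h† h` of a row vector `h`. -/
noncomputable def outerH {M : ℕ} (h : Fin M → ℂ) : Matrix (Fin M) (Fin M) ℂ :=
  Matrix.vecMulVec (star ∘ h) h

/-- The quadratic form `h A⁻¹ h†`. -/
noncomputable def qformInv {M : ℕ} (h : Fin M → ℂ) (A : Matrix (Fin M) (Fin M) ℂ) : ℝ :=
  (h ⬝ᵥ (A⁻¹ *ᵥ (star ∘ h))).re

section RankOneUpdate

variable {n : Type*} [Fintype n] [DecidableEq n]

theorem det_add_smul_vecMulVec {R : Type*} [CommRing R] {A : Matrix n n R} {u v : n → R} {a : R}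
    (hA : IsUnit A.det) :
    (A + a • vecMulVec u v).det = A.det * (1 + a * (v ⬝ᵥ A⁻¹ *ᵥ u)) := by
  rw [← smul_vecMulVec, vecMulVec_eq Unit, det_add_replicateCol_mul_replicateRow hA,
    det_unique (n := Unit), Matrix.add_apply, Matrix.one_apply_eq, Matrix.mul_assoc,
    ← replicateCol_mulVec, replicateRow_mul_replicateCol_apply, mulVec_smul, dotProduct_smul,
    smul_eq_mul]

theorem inv_add_smul_vecMulVec_mulVec {R : Type*} [Field R] {A : Matrix n n R} {u v : n → R}
    {a : R} (hA : IsUnit A.det) (ha : 1 + a * (v ⬝ᵥ A⁻¹ *ᵥ u) ≠ 0) :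
    (A + a • vecMulVec u v)⁻¹ *ᵥ u = (1 + a * (v ⬝ᵥ A⁻¹ *ᵥ u))⁻¹ • A⁻¹ *ᵥ u := by
  have hdet : IsUnit (A + a • vecMulVec u v).det := by
    rw [det_add_smul_vecMulVec hA]
    exact hA.mul ha.isUnit
  have hu : (A + a • vecMulVec u v) *ᵥ (A⁻¹ *ᵥ u) = (1 + a * (v ⬝ᵥ A⁻¹ *ᵥ u)) • u := by
    rw [add_mulVec, mulVec_mulVec, mul_nonsing_inv _ hA, one_mulVec, smul_mulVec,
      vecMulVec_mulVec, op_smul_eq_smul, smul_smul, add_smul, one_smul]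
  rw [eq_inv_smul_iff₀ ha, ← mulVec_smul, ← hu, mulVec_mulVec, nonsing_inv_mul _ hdet, one_mulVec]

end RankOneUpdate

section QuadraticForm

open scoped ComplexOrder

variable {M : ℕ} {h : Fin M → ℂ} {B : Matrix (Fin M) (Fin M) ℂ} {t : ℝ}

theorem qformInv_nonneg (hB : B.PosSemidef) : 0 ≤ qformInv h B := by
  simpa [qformInv, Function.comp_def, Pi.star_def] using
    (Complex.nonneg_iff.mp (hB.inv.dotProduct_mulVec_nonneg (star h))).1

theorem ofReal_qformInv (hB : B.IsHermitian) :
    (qformInv h B : ℂ) = h ⬝ᵥ B⁻¹ *ᵥ (star ∘ h) := by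
  have him := hB.inv.im_star_dotProduct_mulVec_self (star h)
  rw [star_star] at him
  exact Complex.ext rfl him.symm

theorem det_add_smul_outerH (hB : B.IsHermitian) (hdet : IsUnit B.det) :
    (B + t • outerH h).det = B.det * ((1 + t * qformInv h B : ℝ) : ℂ) := by
  push_cast
  rw [outerH, ← Complex.coe_smul, det_add_smul_vecMulVec hdet, ofReal_qformInv hB]

theorem qformInv_add_smul_outerH (hB : B.IsHermitian) (hdet : IsUnit B.det)
    (ht : 1 + t * qformInv h B ≠ 0) :
    qformInv h (B + t • outerH h) = qformInv h B / (1 + t * qformInv h B) := by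
  have ht' : (1 : ℂ) + t * (h ⬝ᵥ B⁻¹ *ᵥ (star ∘ h)) ≠ 0 := by
    rw [← ofReal_qformInv hB]
    exact_mod_cast ht
  rw [qformInv, outerH, ← Complex.coe_smul, inv_add_smul_vecMulVec_mulVec hdet ht',
    dotProduct_smul, ← ofReal_qformInv hB, smul_eq_mul]
  norm_cast
  exact inv_mul_eq_div _ _

theorem logb_det_add_smul_outerH (b : ℝ) (hB : B.PosDef) (ht : 0 ≤ t) :
    Real.logb b (B + t • outerH h).det.re =
      Real.logb b B.det.re + Real.logb b (1 + t * qformInv h B) := by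
  have hc := qformInv_nonneg (h := h) hB.posSemidef
  have hdet : 0 < B.det.re := (Complex.pos_iff.mp hB.det_pos).1
  rw [det_add_smul_outerH hB.isHermitian hB.det_pos.ne'.isUnit, Complex.re_mul_ofReal,
    Real.logb_mul hdet.ne' (by positivity)]

theorem posDef_sum_smul_outerH_add_one {ι : Type*} {s : Finset ι} {q : ι → ℝ}
    (hq : ∀ i ∈ s, 0 ≤ q i) (h : ι → Fin M → ℂ) :
    (∑ i ∈ s, q i • outerH (h i) + 1).PosDef :=
  PosDef.posSemidef_add
    (posSemidef_sum s fun i hi => (posSemidef_vecMulVec_star_self (h i)).smul (hq i hi)) .one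

end QuadraticForm

section ResolventSum

variable {κ : Type*} {S : Finset κ} {w c : κ → ℝ} {L s t : ℝ}

/-- The weighted sum of logarithms `∑ wₖ log (1 + t cₖ)`: the total rate, in nats and up to an
additive constant, as a function of the updated coordinate `t`. -/
noncomputable def logSum (S : Finset κ) (w c : κ → ℝ) (t : ℝ) : ℝ :=
  ∑ k ∈ S, w k * Real.log (1 + t * c k)

/-- The derivative `∑ wₖ cₖ / (1 + t cₖ)` of `logSum`, the scalar form of the function `d`. It is
meaningful where no `1 + t cₖ` vanishes, in particular for `0 ≤ t` and `0 ≤ cₖ`. -/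
noncomputable def resolventSum (S : Finset κ) (w c : κ → ℝ) (t : ℝ) : ℝ :=
  ∑ k ∈ S, w k * (c k / (1 + t * c k))

theorem one_add_mul_pos {a : ℝ} (ht : 0 ≤ t) (ha : 0 ≤ a) : 0 < 1 + t * a := by
  positivity

theorem antitoneOn_resolventSum (hw : ∀ k ∈ S, 0 ≤ w k) (hc : ∀ k ∈ S, 0 ≤ c k) :
    AntitoneOn (resolventSum S w c) (Set.Ici 0) := by
  intro s hs t _ hst
  refine Finset.sum_le_sum fun k hk => mul_le_mul_of_nonneg_left ?_ (hw k hk)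
  have hck := hc k hk
  have := one_add_mul_pos hs (hc k hk)
  gcongr

theorem strictAntiOn_resolventSum (hw : ∀ k ∈ S, 0 ≤ w k) (hc : ∀ k ∈ S, 0 ≤ c k)
    (h0 : 0 < resolventSum S w c 0) : StrictAntiOn (resolventSum S w c) (Set.Ici 0) := by
  obtain ⟨k, hk, hwc⟩ : ∃ k ∈ S, 0 < w k * c k := by
    simpa using Finset.exists_lt_of_sum_lt (f := fun _ => (0 : ℝ))
      (by simpa [resolventSum] using h0)
  have hwk : 0 < w k := pos_of_mul_pos_left hwc (hc k hk)
  have hck : 0 < c k := pos_of_mul_pos_right hwc (hw k hk)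
  intro s hs t _ hst
  refine Finset.sum_lt_sum (fun j hj => mul_le_mul_of_nonneg_left ?_ (hw j hj))
    ⟨k, hk, mul_lt_mul_of_pos_left ?_ hwk⟩
  · have hcj := hc j hj
    have := one_add_mul_pos hs (hc j hj)
    gcongr
  · have := one_add_mul_pos hs (hc k hk)
    gcongr

theorem continuousOn_resolventSum (hc : ∀ k ∈ S, 0 ≤ c k) :
    ContinuousOn (resolventSum S w c) (Set.Ici 0) :=
  continuousOn_finsetSum _ fun k hk => continuousOn_const.mul <|
    continuousOn_const.div (by fun_prop) fun _ ht => (one_add_mul_pos ht (hc k hk)).ne'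

theorem tendsto_resolventSum_atTop :
    Filter.Tendsto (resolventSum S w c) Filter.atTop (nhds 0) := by
  have hterm (k : κ) : Filter.Tendsto (fun t => c k / (1 + t * c k)) Filter.atTop (nhds 0) := by
    rcases eq_or_ne (c k) 0 with hck | hck
    · simp [hck]
    · refine (tendsto_inv_atTop_zero.comp
        (Filter.tendsto_atTop_add_const_left _ (c k)⁻¹ Filter.tendsto_id)).congr fun t => ?_
      have hdiv : (c k)⁻¹ + t = (1 + t * c k) / c k := by field_simp
      rw [Function.comp_apply, id, hdiv, inv_div]
  unfold resolventSum
  simpa only [mul_zero, Finset.sum_const_zero] using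
    tendsto_finsetSum S fun k _ => (hterm k).const_mul (w k)

theorem exists_resolventSum_eq (hc : ∀ k ∈ S, 0 ≤ c k) (hL : 0 < L)
    (hL0 : L ≤ resolventSum S w c 0) : ∃ t, 0 ≤ t ∧ resolventSum S w c t = L := by
  obtain ⟨T, hT, hT0⟩ := ((tendsto_resolventSum_atTop.eventually_le_const hL).and
    (Filter.eventually_ge_atTop 0)).exists
  obtain ⟨t, ht, htL⟩ := intermediate_value_Icc' hT0
    ((continuousOn_resolventSum hc).mono Set.Icc_subset_Ici_self) ⟨hT, hL0⟩
  exact ⟨t, ht.1, htL⟩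

theorem logSum_sub_logSum_le (hw : ∀ k ∈ S, 0 ≤ w k) (hc : ∀ k ∈ S, 0 ≤ c k)
    (hs : 0 ≤ s) (ht : 0 ≤ t) :
    logSum S w c t - logSum S w c s ≤ (t - s) * resolventSum S w c s := by
  rw [logSum, logSum, resolventSum, ← Finset.sum_sub_distrib, Finset.mul_sum]
  refine Finset.sum_le_sum fun k hk => ?_
  have hs' := one_add_mul_pos hs (hc k hk)
  have ht' := one_add_mul_pos ht (hc k hk)
  have htangent : Real.log (1 + t * c k) - Real.log (1 + s * c k) ≤
      (t - s) * (c k / (1 + s * c k)) := by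
    calc Real.log (1 + t * c k) - Real.log (1 + s * c k)
        = Real.log ((1 + t * c k) / (1 + s * c k)) := (Real.log_div ht'.ne' hs'.ne').symm
      _ ≤ (1 + t * c k) / (1 + s * c k) - 1 := Real.log_le_sub_one_of_pos (div_pos ht' hs')
      _ = (t - s) * (c k / (1 + s * c k)) := by rw [div_sub_one hs'.ne']; ring
  calc w k * Real.log (1 + t * c k) - w k * Real.log (1 + s * c k)
      = w k * (Real.log (1 + t * c k) - Real.log (1 + s * c k)) := by ring
    _ ≤ w k * ((t - s) * (c k / (1 + s * c k))) := mul_le_mul_of_nonneg_left htangent (hw k hk)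
    _ = (t - s) * (w k * (c k / (1 + s * c k))) := by ring

/-- The KKT conditions are sufficient: `hL` is stationarity with a nonnegative multiplier for the
constraint `0 ≤ t`, and `hslack` is complementary slackness. -/
theorem isMinOn_mul_sub_logSum (hw : ∀ k ∈ S, 0 ≤ w k) (hc : ∀ k ∈ S, 0 ≤ c k) (hs : 0 ≤ s)
    (hL : resolventSum S w c s ≤ L) (hslack : s * (L - resolventSum S w c s) = 0) :
    IsMinOn (fun t => t * L - logSum S w c t) (Set.Ici 0) s := by
  intro t ht
  have htangent := logSum_sub_logSum_le hw hc hs ht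
  have hmultiplier : 0 ≤ t * (L - resolventSum S w c s) := mul_nonneg ht (sub_nonneg.mpr hL)
  change s * L - logSum S w c s ≤ t * L - logSum S w c t
  linarith

end ResolventSum

section RankOneUpdateFamily

open scoped ComplexOrder

variable {M : ℕ} {κ : Type*} {h : Fin M → ℂ} {B : κ → Matrix (Fin M) (Fin M) ℂ} {t : ℝ}

theorem sum_mul_qformInv_add_smul_outerH {S : Finset κ} {w : κ → ℝ}
    (hB : ∀ k ∈ S, (B k).PosDef) (ht : 0 ≤ t) :
    ∑ k ∈ S, w k * qformInv h (B k + t • outerH h) =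
      resolventSum S w (fun k => qformInv h (B k)) t := by
  refine Finset.sum_congr rfl fun k hk => ?_
  rw [qformInv_add_smul_outerH (hB k hk).isHermitian (hB k hk).det_pos.ne'.isUnit
    (one_add_mul_pos ht (qformInv_nonneg (hB k hk).posSemidef)).ne']

theorem sum_mul_logb_det_add_smul_outerH [Fintype κ] {w : κ → ℝ} {b : ℝ} {p : κ → Prop}
    [DecidablePred p] (hB : ∀ k, p k → (B k).PosDef) (ht : 0 ≤ t) :
    ∑ k, w k * Real.logb b (B k + if p k then t • outerH h else 0).det.re =
      ∑ k, w k * Real.logb b (B k).det.re +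
        logSum {k | p k} w (fun k => qformInv h (B k)) t / Real.log b := by
  rw [logSum, Finset.sum_filter, Finset.sum_div, ← Finset.sum_add_distrib]
  refine Finset.sum_congr rfl fun k _ => ?_
  split_ifs with hk
  · rw [logb_det_add_smul_outerH b (hB k hk) ht, mul_add, mul_div_assoc, Real.log_div_log]
  · rw [add_zero, zero_div, add_zero]

end RankOneUpdateFamily

open scoped ComplexOrder in
/-- Every family of user sets is allowed: `active i k` says that user `i` enters the `k`-th
determinant. The theorem of the paper is the chain `active i k ↔ i ≤ k`. -/
theorem coordinate_descent_optimality_general {M : ℕ} {ι κ : Type*} [Fintype ι] [DecidableEq ι]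
    [Fintype κ] {b : ℝ} (hb : 1 < b) (active : ι → κ → Prop) [DecidableRel active]
    (h : ι → Fin M → ℂ) (m : ι) (w : κ → ℝ) (hw : ∀ k, active m k → 0 ≤ w k)
    (q : ι → ℝ) (hq : ∀ i, i ≠ m → 0 ≤ q i)
    (d : ℝ → ℝ)
    (hd : ∀ t : ℝ, d t = ∑ k with active m k,
      w k * qformInv (h m) (t • outerH (h m) +
        (∑ i with active i k ∧ i ≠ m, q i • outerH (h i)) + 1))
    (Φ : ℝ → ℝ)
    (hΦ : ∀ t : ℝ, Φ t = ((∑ i with i ≠ m, q i) + t) -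
      ∑ k, w k * Real.logb b
        ((∑ i with active i k ∧ i ≠ m, q i • outerH (h i)) +
          (if active m k then t • outerH (h m) else 0) + 1 :
            Matrix (Fin M) (Fin M) ℂ).det.re) :
    (∀ s t : ℝ, 0 ≤ s → s ≤ t → d t ≤ d s) ∧
    (d 0 ≤ Real.log b → ∀ t, 0 ≤ t → Φ 0 ≤ Φ t) ∧
    (Real.log b < d 0 → ∃ t₀ : ℝ, 0 ≤ t₀ ∧ d t₀ = Real.log b ∧
      (∀ t, 0 ≤ t → d t = Real.log b → t = t₀) ∧ (∀ t, 0 ≤ t → Φ t₀ ≤ Φ t)) := by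
  have hlog : 0 < Real.log b := Real.log_pos hb
  let B (k : κ) : Matrix (Fin M) (Fin M) ℂ :=
    ∑ i with active i k ∧ i ≠ m, q i • outerH (h i) + 1
  have hB (k : κ) : (B k).PosDef :=
    posDef_sum_smul_outerH_add_one (fun i hi => hq i (Finset.mem_filter.mp hi).2.2) h
  let c (k : κ) : ℝ := qformInv (h m) (B k)
  let S : Finset κ := {k | active m k}
  have hw_nonneg : ∀ k ∈ S, 0 ≤ w k := fun k hk => hw k (Finset.mem_filter.mp hk).2
  have hc_nonneg : ∀ k ∈ S, 0 ≤ c k := fun k _ => qformInv_nonneg (hB k).posSemidef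
  have hd_eq : Set.EqOn d (resolventSum S w c) (Set.Ici 0) := by
    intro t ht
    rw [hd, ← sum_mul_qformInv_add_smul_outerH (fun k _ => hB k) ht]
    refine Finset.sum_congr rfl fun k _ => ?_
    rw [add_assoc, add_comm]
  have hΦ_eq (t : ℝ) (ht : 0 ≤ t) : Φ t =
      ∑ i with i ≠ m, q i - ∑ k, w k * Real.logb b (B k).det.re +
        (t * Real.log b - logSum S w c t) / Real.log b := by
    simp only [hΦ, add_right_comm _ (ite _ _ _)]
    rw [sum_mul_logb_det_add_smul_outerH (fun k _ => hB k) ht]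
    field
  have hmin (s : ℝ) (hs : 0 ≤ s) (hds : d s ≤ Real.log b) (hslack : s * (Real.log b - d s) = 0)
      (t : ℝ) (ht : 0 ≤ t) : Φ s ≤ Φ t := by
    rw [hd_eq hs] at hds hslack
    rw [hΦ_eq s hs, hΦ_eq t ht]
    gcongr _ + ?_ / _
    exact isMinOn_mul_sub_logSum hw_nonneg hc_nonneg hs hds hslack ht
  refine ⟨fun s t hs hst => ?_, fun h0 => hmin 0 le_rfl h0 (zero_mul _), fun h0 => ?_⟩
  · rw [hd_eq hs, hd_eq (hs.trans hst)]
    exact antitoneOn_resolventSum hw_nonneg hc_nonneg hs (hs.trans hst) hst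
  · rw [hd_eq Set.self_mem_Ici] at h0
    obtain ⟨t₀, ht₀, hroot⟩ := exists_resolventSum_eq hc_nonneg hlog h0.le
    rw [← hd_eq ht₀] at hroot
    refine ⟨t₀, ht₀, hroot, fun t ht hdt => ?_, hmin t₀ ht₀ hroot.le (by simp [hroot])⟩
    refine (strictAntiOn_resolventSum hw_nonneg hc_nonneg (hlog.trans h0)).injOn ht ht₀ ?_
    rw [← hd_eq ht, ← hd_eq ht₀, hdt, hroot]

/-- Coordinate-descent optimality condition for Problem P3: `d` is nonincreasing on `[0,∞)`;
the minimizer of `Φ` over `q_m ≥ 0` is `0` if `d(0) ≤ ln 2`, and otherwise the unique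
nonnegative root of `d(t) = ln 2`. -/
theorem coordinate_descent_optimality {M K : ℕ} (h : Fin K → Fin M → ℂ) (β : ℕ → ℝ)
    (hβa : Antitone β) (hβ0 : ∀ k, 0 ≤ β k) (hβK : β K = 0)
    (m : Fin K) (q : Fin K → ℝ) (hq : ∀ k, 0 ≤ q k)
    (d : ℝ → ℝ)
    (hd : ∀ t : ℝ, d t = ∑ k ∈ Finset.univ.filter (fun k : Fin K => m ≤ k),
      (β (k : ℕ) - β ((k : ℕ) + 1)) *
        qformInv (h m) (t • outerH (h m) +
          (∑ i ∈ Finset.univ.filter (fun i : Fin K => i ≤ k ∧ i ≠ m), q i • outerH (h i)) + 1))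
    (Φ : ℝ → ℝ)
    (hΦ : ∀ t : ℝ, Φ t = ((∑ i ∈ Finset.univ.filter (fun i : Fin K => i ≠ m), q i) + t) -
      ∑ k : Fin K, (β (k : ℕ) - β ((k : ℕ) + 1)) *
        Real.logb 2
          ((((∑ i ∈ Finset.univ.filter (fun i : Fin K => i ≤ k ∧ i ≠ m), q i • outerH (h i)) +
            (if m ≤ k then t • outerH (h m) else 0) + 1 :
              Matrix (Fin M) (Fin M) ℂ).det.re))) :
    (∀ s t : ℝ, 0 ≤ s → s ≤ t → d t ≤ d s) ∧
    (d 0 ≤ Real.log 2 → ∀ t, 0 ≤ t → Φ 0 ≤ Φ t) ∧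
    (Real.log 2 < d 0 → ∃ t₀ : ℝ, 0 ≤ t₀ ∧ d t₀ = Real.log 2 ∧
        (∀ t, 0 ≤ t → d t = Real.log 2 → t = t₀) ∧ (∀ t, 0 ≤ t → Φ t₀ ≤ Φ t)) :=
  coordinate_descent_optimality_general one_lt_two (· ≤ ·) h m _
    (fun k _ => sub_nonneg.mpr (hβa k.val.le_succ)) q (fun k _ => hq k) d hd Φ hΦ
end

section
/- In the setting of the coordinate minimization of Problem P3, if d(0) > ln 2 then the unique root q₀ of d(t) = ln 2 satisfies 0 < q₀ ≤ β_m / ln 2. -/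
open Matrix

section QuadraticForms

open scoped ComplexOrder

variable {M : ℕ}

lemma posSemidef_outerH (v : Fin M → ℂ) : (outerH v).PosSemidef :=
  posSemidef_vecMulVec_star_self v

lemma posSemidef_sum_smul_outerH {ι : Type*} (s : Finset ι) (v : ι → Fin M → ℂ) {q : ι → ℝ}
    (hq : ∀ i ∈ s, 0 ≤ q i) : (∑ i ∈ s, q i • outerH (v i)).PosSemidef :=
  posSemidef_sum s fun i hi ↦ (posSemidef_outerH (v i)).smul (hq i hi)

lemma star_dotProduct_outerH_mulVec (v x : Fin M → ℂ) :
    star x ⬝ᵥ outerH v *ᵥ x = Complex.normSq (v ⬝ᵥ x) := by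
  rw [outerH, vecMulVec_mulVec, dotProduct_smul, op_smul_eq_smul, smul_eq_mul]
  exact (congrArg _ (star_dotProduct_star x v)).trans (Complex.mul_conj _)

lemma ofReal_qformInv_s9 (v : Fin M → ℂ) {A : Matrix (Fin M) (Fin M) ℂ} (hA : A.IsHermitian) :
    (qformInv v A : ℂ) = v ⬝ᵥ A⁻¹ *ᵥ (star ∘ v) := by
  have im_eq_zero := hA.inv.im_star_dotProduct_mulVec_self (star v)
  rw [star_star] at im_eq_zero
  exact Complex.ext rfl im_eq_zero.symm

lemma qformInv_nonneg_s9 (v : Fin M → ℂ) {A : Matrix (Fin M) (Fin M) ℂ} (hA : A.PosSemidef) :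
    0 ≤ qformInv v A := by
  have form_nonneg := hA.inv.re_dotProduct_nonneg (star v)
  rwa [star_star] at form_nonneg

/- Evaluating `t • outerH v ≤ A` at `x = A⁻¹ v†`, where `v x = s` and `x† A x = s` for
`s = qformInv v A`, gives `t * s ^ 2 ≤ s`. -/
lemma mul_qformInv_le_one {v : Fin M → ℂ} {A : Matrix (Fin M) (Fin M) ℂ} {t : ℝ}
    (hA : A.PosDef) (htA : (A - t • outerH v).PosSemidef) : t * qformInv v A ≤ 1 := by
  set s := qformInv v A
  set x := A⁻¹ *ᵥ (star ∘ v)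
  have dot_x : v ⬝ᵥ x = s := (ofReal_qformInv_s9 v hA.isHermitian).symm
  have mulVec_x : A *ᵥ x = star v := by
    rw [mulVec_mulVec, mul_nonsing_inv A ((isUnit_iff_isUnit_det A).1 hA.isUnit), one_mulVec]
    rfl
  have form_x : star x ⬝ᵥ A *ᵥ x = s := by
    rw [mulVec_x, star_dotProduct_star, dot_x, Complex.star_def, Complex.conj_ofReal]
  have outerH_x : star x ⬝ᵥ outerH v *ᵥ x = (s * s : ℝ) := by
    rw [star_dotProduct_outerH_mulVec, dot_x, Complex.normSq_ofReal]
  have quadratic : t * (s * s) ≤ s := by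
    have form_nonneg := htA.dotProduct_mulVec_nonneg x
    rw [sub_mulVec, dotProduct_sub, smul_mulVec, dotProduct_smul, form_x, outerH_x,
      Complex.real_smul, sub_nonneg] at form_nonneg
    exact_mod_cast form_nonneg
  obtain s_zero | s_pos := (qformInv_nonneg_s9 v hA.posSemidef).eq_or_lt'
  · simp [s, s_zero]
  · exact le_of_mul_le_mul_right (by linarith) s_pos

lemma mul_qformInv_smul_outerH_add_one_le_one (v : Fin M → ℂ) {B : Matrix (Fin M) (Fin M) ℂ}
    (hB : B.PosSemidef) {t : ℝ} (ht : 0 ≤ t) : t * qformInv v (t • outerH v + B + 1) ≤ 1 := by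
  have hA : (t • outerH v + B + 1).PosDef :=
    .posSemidef_add (((posSemidef_outerH v).smul ht).add hB) .one
  refine mul_qformInv_le_one hA ?_
  rw [add_assoc, add_sub_cancel_left]
  exact hB.add .one

end QuadraticForms

lemma sum_filter_le_sub_succ {G : Type*} [AddCommGroup G] {K : ℕ} (f : ℕ → G) (m : Fin K) :
    ∑ k ∈ Finset.univ.filter (fun k : Fin K => m ≤ k), (f k - f (k + 1)) = f m - f K := by
  calc ∑ k ∈ Finset.univ.filter (fun k : Fin K => m ≤ k), (f k - f (k + 1))
      = ∑ k ∈ Finset.Ico (m : ℕ) K, (f k - f (k + 1)) := by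
        rw [← Fin.map_valEmbedding_Ici, Finset.sum_map, Finset.filter_le_eq_Ici]
        rfl
    _ = -∑ k ∈ Finset.Ico (m : ℕ) K, (f (k + 1) - f k) := by
        simp only [← Finset.sum_neg_distrib, neg_sub]
    _ = f m - f K := by rw [Finset.sum_Ico_sub f m.is_lt.le, neg_sub]

section CoordinateDerivative

variable {M K : ℕ} (h : Fin K → Fin M → ℂ) {β : ℕ → ℝ} {m : Fin K} {q : Fin K → ℝ}

/-- The function `d(t)` of Problem P3: the derivative at `q_m = t` of the weighted rate
`∑ k, (β_k - β_{k+1}) log det (I + ∑_{i ≤ k} q_i h_i† h_i)`, the other powers being fixed.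
Users are indexed by `Fin K`, so `β K` plays the role of the paper's `β_{K+1}`. -/
noncomputable def coordDeriv (β : ℕ → ℝ) (m : Fin K) (q : Fin K → ℝ) (t : ℝ) : ℝ :=
  ∑ k ∈ Finset.univ.filter (fun k : Fin K => m ≤ k),
    (β (k : ℕ) - β ((k : ℕ) + 1)) *
      qformInv (h m) (t • outerH (h m) +
        (∑ i ∈ Finset.univ.filter (fun i : Fin K => i ≤ k ∧ i ≠ m), q i • outerH (h i)) + 1)

lemma mul_coordDeriv_le (hβ : AntitoneOn β (Set.Icc (m : ℕ) K)) (hq : ∀ i ≠ m, 0 ≤ q i) {t : ℝ}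
    (ht : 0 ≤ t) : t * coordDeriv h β m q t ≤ β m - β K := by
  rw [coordDeriv, Finset.mul_sum, ← sum_filter_le_sub_succ β m]
  refine Finset.sum_le_sum fun k hk ↦ ?_
  have m_le_k : (m : ℕ) ≤ k := (Finset.mem_filter.1 hk).2
  have weight_nonneg : 0 ≤ β k - β (k + 1) :=
    sub_nonneg.2 <| hβ ⟨m_le_k, k.is_lt.le⟩ ⟨m_le_k.trans (Nat.le_succ k), k.is_lt⟩ (Nat.le_succ k)
  rw [mul_left_comm]
  refine mul_le_of_le_one_right weight_nonneg (mul_qformInv_smul_outerH_add_one_le_one _ ?_ ht)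
  exact posSemidef_sum_smul_outerH _ h fun i hi ↦ hq i (Finset.mem_filter.1 hi).2.2

theorem root_bound_general (hβ : AntitoneOn β (Set.Icc (m : ℕ) K)) (hq : ∀ i ≠ m, 0 ≤ q i)
    {c : ℝ} (hc : 0 < c) (hd0 : c < coordDeriv h β m q 0)
    {q₀ : ℝ} (hq₀ : 0 ≤ q₀) (hroot : coordDeriv h β m q q₀ = c) :
    0 < q₀ ∧ q₀ ≤ (β m - β K) / c := by
  have q₀_ne_zero : q₀ ≠ 0 := by
    rintro rfl
    exact hd0.ne' hroot
  refine ⟨hq₀.lt_of_ne' q₀_ne_zero, (le_div_iff₀ hc).2 ?_⟩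
  exact hroot ▸ mul_coordDeriv_le h hβ hq hq₀

end CoordinateDerivative

/-- If `d(0) > ln 2`, the unique root `q₀` of `d(t) = ln 2` satisfies `0 < q₀ ≤ β_m / ln 2`. -/
theorem root_bound {M K : ℕ} (h : Fin K → Fin M → ℂ) (β : ℕ → ℝ)
    (hβa : Antitone β) (hβ0 : ∀ k, 0 ≤ β k) (hβK : β K = 0)
    (m : Fin K) (q : Fin K → ℝ) (hq : ∀ k, 0 ≤ q k)
    (d : ℝ → ℝ)
    (hd : ∀ t : ℝ, d t = ∑ k ∈ Finset.univ.filter (fun k : Fin K => m ≤ k),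
      (β (k : ℕ) - β ((k : ℕ) + 1)) *
        qformInv (h m) (t • outerH (h m) +
          (∑ i ∈ Finset.univ.filter (fun i : Fin K => i ≤ k ∧ i ≠ m), q i • outerH (h i)) + 1))
    (hd0 : Real.log 2 < d 0)
    (q₀ : ℝ) (hq₀ : 0 ≤ q₀) (hroot : d q₀ = Real.log 2) :
    0 < q₀ ∧ q₀ ≤ β (m : ℕ) / Real.log 2 := by
  obtain rfl : d = coordDeriv h β m q := funext hd
  simpa only [hβK, sub_zero] using root_bound_general h (hβa.antitoneOn _) (fun i _ ↦ hq i)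
    (Real.log_pos one_lt_two) hd0 hq₀ hroot
end
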